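/- Let n ≥ 1, q a prime power, and J ⊆ {1, …, n} a nonempty self-opposite type. If C is an EKR-set of flags of type J in V = F_q^{n+1}, then |C| · (1 + (√q)^{n+1}) ≤ v, where v is the total number of flags of type J in V (so |C| ≤ v/(1 + q^{(n+1)/2})). -/

import Mathlib

/-- A flag of type `J ⊆ {1, …, n}` in `V = F^{n+1}`: a family of subspaces `(U_k)_{k∈J}`
with `dim U_k = k` and `U_k ⊆ U_l` whenever `k ≤ l`. -/
structure FlagOfType (F : Type) [Field F] (n : ℕ) (J : Finset ℕ) where
  U : J → Submodule F (Fin (n + 1) → F)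
  dim : ∀ k : J, Module.finrank F (U k) = (k : ℕ)
  mono : ∀ k l : J, (k : ℕ) ≤ (l : ℕ) → U k ≤ U l

/-- Two flags `(U_k)` and `(W_k)` of self-opposite type `J` are opposite if
`U_k ∩ W_{n+1−k} = 0` for all `k ∈ J`. -/
def FlagOfType.Opposite {F : Type} [Field F] {n : ℕ} {J : Finset ℕ}
    (F1 F2 : FlagOfType F n J) : Prop :=
  ∀ k l : J, (l : ℕ) = n + 1 - (k : ℕ) → F1.U k ⊓ F2.U l = ⊥

open Module

def ekrE {R : Type*} [Monoid R] (T : ℕ → R) : ℕ → R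
  | 0 => 1
  | m + 1 => T (m + 1) * ekrE T m

def ekrD {R : Type*} [Monoid R] (T : ℕ → R) : ℕ → R
  | 0 => 1
  | m + 1 => ekrD T m * ekrE T (m + 1)

lemma ekr_det_T {M : Type*} [AddCommGroup M] [Module ℝ M] [FiniteDimensional ℝ M]
    (T : End ℝ M) (q : ℝ) (hq : 0 < q) (h : T * T = (q - 1) • T + q • 1) :
    |LinearMap.det T| = q ^ (finrank ℝ (LinearMap.ker (T - q • 1))) := by
  set K := LinearMap.ker (T - q • (1 : End ℝ M)) with hK
  have memK : ∀ x, x ∈ K ↔ T x = q • x := by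
    intro x; simp [hK, sub_eq_zero]
  have hinv : K ≤ K.comap T := by
    intro x hx
    rw [Submodule.mem_comap, memK, (memK x).1 hx, map_smul, (memK x).1 hx]
  have hTT : ∀ x, T (T x) = (q - 1) • T x + q • x := by
    intro x; simpa using LinearMap.congr_fun h x
  rw [LinearMap.det_eq_det_mul_det K T hinv]
  have h1 : T.restrict (show ∀ x ∈ K, T x ∈ K from hinv) = q • LinearMap.id := by
    ext x
    simpa using (memK x).1 x.2
  have h2 : K.mapQ K T hinv = (-1 : ℝ) • LinearMap.id := by
    apply Submodule.linearMap_qext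
    ext x
    simp only [LinearMap.comp_apply, Submodule.mkQ_apply, Submodule.mapQ_apply,
      LinearMap.smul_apply, LinearMap.id_apply]
    rw [← Submodule.Quotient.mk_smul, Submodule.Quotient.eq, memK]
    simp only [map_sub, map_smul, hTT]
    module
  rw [h1, h2, LinearMap.det_smul, LinearMap.det_smul]
  simp [abs_mul, abs_pow, abs_of_pos hq]

/-- the key eigenvalue bound -/
lemma ekr_eig {M : Type*} [AddCommGroup M] [Module ℝ M] [FiniteDimensional ℝ M] [Nontrivial M]
    (n : ℕ) (hn : 1 ≤ n) (T : ℕ → End ℝ M) (q lam : ℝ) (hq : 1 < q)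
    (hquad : ∀ i, 1 ≤ i → i ≤ n → T i * T i = (q - 1) • T i + q • 1)
    (hA : ekrD T n * ekrD T n = lam • 1)
    (hcomm : ∀ i, 1 ≤ i → i ≤ n → ekrD T n * T i = T (n + 1 - i) * ekrD T n)
    (hker : ∀ x, (∀ i, 1 ≤ i → i ≤ n → T i x = q • x) → x = 0) :
    lam ≤ q ^ ((n - 1) * (n + 1)) := by
  have hq0 : 0 < q := by linarith
  set d := finrank ℝ M with hd
  have hdpos : 0 < d := finrank_pos
  set a : ℕ → ℕ := fun i => finrank ℝ (LinearMap.ker (T i - q • (1 : End ℝ M))) with ha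
  have hdet : ∀ i, 1 ≤ i → i ≤ n → |LinearMap.det (T i)| = q ^ a i := fun i h1 h2 =>
    ekr_det_T (T i) q hq0 (hquad i h1 h2)
  have hE : ∀ m ≤ n, |LinearMap.det (ekrE T m)| = q ^ (∑ i ∈ Finset.range m, a (i + 1)) := by
    intro m
    induction m with
    | zero => intro _; simp [ekrE]
    | succ m ih =>
      intro hm
      rw [ekrE, map_mul, abs_mul, ih (by omega), hdet _ (by omega) hm, Finset.sum_range_succ,
        pow_add, mul_comm]
  have hD : ∀ m ≤ n, |LinearMap.det (ekrD T m)| =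
      q ^ (∑ i ∈ Finset.range m, (m - i) * a (i + 1)) := by
    intro m
    induction m with
    | zero => intro _; simp [ekrD]
    | succ m ih =>
      intro hm
      rw [ekrD, map_mul, abs_mul, ih (by omega), hE _ hm, ← pow_add]
      congr 1
      rw [Finset.sum_range_succ, Finset.sum_range_succ, ← add_assoc, ← Finset.sum_add_distrib]
      congr 1
      · apply Finset.sum_congr rfl
        intro i hi
        have := Finset.mem_range.1 hi
        rw [show m + 1 - i = (m - i) + 1 by omega]; ring
      · simp
  have hD0 : LinearMap.det (ekrD T n) ≠ 0 := by
    intro h0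
    have := hD n le_rfl
    rw [h0, abs_zero] at this
    exact (pow_pos hq0 _).ne this
  have hsym : ∀ i, 1 ≤ i → i ≤ n → a i = a (n + 1 - i) := by
    intro i h1 h2
    have := congrArg LinearMap.det (hcomm i h1 h2)
    rw [map_mul, map_mul, mul_comm] at this
    have := mul_right_cancel₀ hD0 this
    have h3 := hdet i h1 h2
    rw [this, hdet _ (by omega) (by omega)] at h3
    exact (pow_right_injective₀ hq0 hq.ne' h3).symm
  have hsum : 2 * (∑ i ∈ Finset.range n, (n - i) * a (i + 1)) =
      (n + 1) * ∑ i ∈ Finset.range n, a (i + 1) := by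
    rw [two_mul]
    nth_rewrite 2 [← Finset.sum_range_reflect]
    rw [← Finset.sum_add_distrib, Finset.mul_sum]
    apply Finset.sum_congr rfl
    intro i hi
    have := Finset.mem_range.1 hi
    rw [show n - (n - 1 - i) = i + 1 by omega, hsym (n - 1 - i + 1) (by omega) (by omega),
      show n + 1 - (n - 1 - i + 1) = i + 1 by omega, ← add_mul]
    congr 1; omega
  -- dimension count
  have hrange : d ≤ ∑ i ∈ Finset.range n, (d - a (i + 1)) := by
    let φ : M →ₗ[ℝ] ((i : Fin n) → LinearMap.range (T (i + 1) - q • (1 : End ℝ M))) :=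
      LinearMap.pi fun i => (T (i + 1) - q • (1 : End ℝ M)).rangeRestrict
    have hinj : Function.Injective φ := by
      rw [injective_iff_map_eq_zero]
      intro x hx
      apply hker
      intro i h1 h2
      obtain ⟨k, rfl⟩ : ∃ k, i = k + 1 := ⟨i - 1, by omega⟩
      have := congrArg Subtype.val (congrFun hx ⟨k, by omega⟩)
      simp only [φ, LinearMap.pi_apply, LinearMap.codRestrict_apply, LinearMap.rangeRestrict] at this
      simpa [sub_eq_zero] using this
    have h := LinearMap.finrank_le_finrank_of_injective hinj
    rw [finrank_pi_fintype] at h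
    rw [Finset.sum_range]
    refine h.trans (le_of_eq ?_)
    apply Finset.sum_congr rfl
    intro i _
    have := LinearMap.finrank_range_add_finrank_ker (T (i + 1) - q • (1 : End ℝ M))
    simp only [ha, hd]; omega
  have hale : ∀ i, a i ≤ d := fun i => Submodule.finrank_le _
  have hsa : ∑ i ∈ Finset.range n, a (i + 1) ≤ (n - 1) * d := by
    have h1 : ∑ i ∈ Finset.range n, (d - a (i + 1)) + ∑ i ∈ Finset.range n, a (i + 1) = n * d := by
      rw [← Finset.sum_add_distrib]
      rw [Finset.sum_congr rfl (fun i _ => Nat.sub_add_cancel (hale (i + 1)))]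
      simp
    have h2 : (n - 1) * d + d = n * d := by
      obtain ⟨m, rfl⟩ : ∃ m, n = m + 1 := ⟨n - 1, by omega⟩
      simp; ring
    omega
  have hlam : lam ^ d = q ^ ((n + 1) * ∑ i ∈ Finset.range n, a (i + 1)) := by
    have := congrArg LinearMap.det hA
    rw [map_mul, LinearMap.det_smul, map_one, mul_one, ← abs_mul_abs_self, hD n le_rfl,
      ← pow_add, ← two_mul, hsum] at this
    exact this.symm
  have hle : lam ^ d ≤ (q ^ ((n - 1) * (n + 1))) ^ d := by
    rw [hlam, ← pow_mul]
    apply pow_le_pow_right₀ hq.le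
    calc _ ≤ (n + 1) * ((n - 1) * d) := Nat.mul_le_mul_left _ hsa
      _ = _ := by ring
  by_contra hcon
  push Not at hcon
  exact absurd hle (not_le.2 (pow_lt_pow_left₀ hcon (by positivity) hdpos.ne'))

lemma ekr_word_intertwine {M N : Type*} [AddCommGroup M] [Module ℝ M] [AddCommGroup N] [Module ℝ N]
    (ι : M →ₗ[ℝ] N) (T' : ℕ → End ℝ M) (T : ℕ → End ℝ N)
    (h : ∀ i x, ι (T' i x) = T i (ι x)) (m : ℕ) (x : M) :
    ι (ekrD T' m x) = ekrD T m (ι x) := by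
  have hE : ∀ m x, ι (ekrE T' m x) = ekrE T m (ι x) := by
    intro m
    induction m with
    | zero => intro x; simp [ekrE]
    | succ m ih => intro x; simp [ekrE, h, ih]
  induction m generalizing x with
  | zero => simp [ekrD]
  | succ m ih => simp [ekrD, ih, hE]

lemma ekr_word_hom {R S : Type*} [Monoid R] [Monoid S] (φ : R →* S) (T : ℕ → R) (m : ℕ) :
    φ (ekrD T m) = ekrD (fun i => φ (T i)) m := by
  have hE : ∀ m, φ (ekrE T m) = ekrE (fun i => φ (T i)) m := by
    intro m
    induction m with
    | zero => simp [ekrE]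
    | succ m ih => simp [ekrE, ih]
  induction m with
  | zero => simp [ekrD]
  | succ m ih => simp [ekrD, ih, hE]

open Matrix in
lemma ekr_mat {X : Type*} [Fintype X] [DecidableEq X] (n : ℕ) (hn : 1 ≤ n)
    (T : ℕ → Matrix X X ℝ) (A : Matrix X X ℝ) (q : ℝ) (hq : 1 < q)
    (hquad : ∀ i, 1 ≤ i → i ≤ n → T i * T i = (q - 1) • T i + q • 1)
    (hA : A = ekrD T n)
    (hcomm : ∀ i, 1 ≤ i → i ≤ n → A * T i = T (n + 1 - i) * A)
    (h0 : ∀ i, ¬ (1 ≤ i ∧ i ≤ n) → T i = 0)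
    (hTsym : ∀ i, (T i)ᵀ = T i)
    (hT1 : ∀ i, 1 ≤ i → i ≤ n → T i *ᵥ (1 : X → ℝ) = q • (1 : X → ℝ))
    (hconn : ∀ f : X → ℝ, (∀ i, 1 ≤ i → i ≤ n → T i *ᵥ f = q • f) → ∀ x y, f x = f y)
    (μ : ℝ) (g : X → ℝ) (hg : g ≠ 0) (hAg : A *ᵥ g = μ • g) (hsum : 1 ⬝ᵥ g = 0) :
    μ ^ 2 ≤ q ^ ((n - 1) * (n + 1)) := by
  let M : Submodule ℝ (X → ℝ) :=
    { carrier := {x | A *ᵥ (A *ᵥ x) = μ ^ 2 • x ∧ 1 ⬝ᵥ x = 0}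
      add_mem' := by
        rintro x y ⟨h1, h2⟩ ⟨h3, h4⟩
        refine ⟨?_, ?_⟩
        · rw [mulVec_add, mulVec_add, h1, h3, smul_add]
        · rw [dotProduct_add, h2, h4, add_zero]
      zero_mem' := by simp
      smul_mem' := by
        rintro c x ⟨h1, h2⟩
        refine ⟨?_, ?_⟩
        · rw [mulVec_smul, mulVec_smul, h1, smul_comm]
        · rw [dotProduct_smul, h2, smul_zero] }
  have memM : ∀ x, x ∈ M ↔ A *ᵥ (A *ᵥ x) = μ ^ 2 • x ∧ 1 ⬝ᵥ x = 0 := fun x => Iff.rfl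
  have hgM : g ∈ M := by
    rw [memM]; refine ⟨?_, hsum⟩
    rw [hAg, mulVec_smul, hAg, smul_smul, sq]
  have : Nontrivial M := ⟨⟨⟨g, hgM⟩, 0, fun h => hg (congrArg Subtype.val h)⟩⟩
  have hAAT : ∀ i, A * (A * T i) = T i * (A * A) := by
    intro i
    by_cases h : 1 ≤ i ∧ i ≤ n
    · rw [hcomm i h.1 h.2, ← Matrix.mul_assoc, hcomm (n + 1 - i) (by omega) (by omega),
        show n + 1 - (n + 1 - i) = i by omega, Matrix.mul_assoc]
    · simp [h0 i h]
  have hinv : ∀ i, ∀ x ∈ M, (T i).mulVecLin x ∈ M := by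
    intro i x hx
    rw [memM] at hx ⊢
    rw [mulVecLin_apply]
    refine ⟨?_, ?_⟩
    · rw [mulVec_mulVec, mulVec_mulVec, Matrix.mul_assoc, hAAT, ← mulVec_mulVec, ← mulVec_mulVec, hx.1, mulVec_smul]
    · by_cases h : 1 ≤ i ∧ i ≤ n
      · rw [dotProduct_mulVec, ← mulVec_transpose, hTsym, hT1 i h.1 h.2, smul_dotProduct, hx.2,
          smul_zero]
      · simp [h0 i h]
  let T' : ℕ → End ℝ M := fun i => (T i).mulVecLin.restrict (hinv i)
  have hT' : ∀ i (x : M), ((T' i x : M) : X → ℝ) = T i *ᵥ x := fun i x => rfl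
  have hA' : ∀ x : M, ((ekrD T' n x : M) : X → ℝ) = A *ᵥ x := by
    intro x
    have h1 := ekr_word_intertwine M.subtype T' (fun i => (T i).mulVecLin) (fun i x => rfl) n x
    have h2 := ekr_word_hom (Matrix.toLinAlgEquiv' (R := ℝ) (n := X)).toAlgHom.toRingHom.toMonoidHom T n
    have h3 : ekrD (fun i => (T i).mulVecLin) n = A.mulVecLin := by
      rw [hA]; exact h2.symm
    rw [h3] at h1
    exact h1
  apply ekr_eig n hn T' q (μ ^ 2) hq
  · intro i h1 h2
    ext1 x
    apply Subtype.ext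
    have := congrArg (fun B => B *ᵥ (x : X → ℝ)) (hquad i h1 h2)
    simp only [add_mulVec, smul_mulVec, one_mulVec, ← mulVec_mulVec] at this
    simpa [hT'] using this
  · ext1 x
    apply Subtype.ext
    simpa [hA'] using ((memM x).1 x.2).1
  · intro i h1 h2
    ext1 x
    apply Subtype.ext
    simp [hA', hT', hcomm i h1 h2]
  · intro x hx
    apply Subtype.ext
    have hc := hconn x (fun i h1 h2 => by
      have := congrArg Subtype.val (hx i h1 h2)
      simpa [hT'] using this)
    ext z
    have h2 := ((memM x).1 x.2).2
    simp only [dotProduct, Pi.one_apply, one_mul] at h2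
    rw [Finset.sum_congr rfl (fun y _ => hc y z)] at h2
    have : Nonempty X := ⟨z⟩
    simpa using h2

open Matrix in
lemma ekr_hoffman {X : Type*} [Fintype X] [DecidableEq X] (n : ℕ) (hn : 1 ≤ n)
    (T : ℕ → Matrix X X ℝ) (A : Matrix X X ℝ) (q : ℝ) (hq : 1 < q)
    (hquad : ∀ i, 1 ≤ i → i ≤ n → T i * T i = (q - 1) • T i + q • 1)
    (hA : A = ekrD T n)
    (hcomm : ∀ i, 1 ≤ i → i ≤ n → A * T i = T (n + 1 - i) * A)
    (h0 : ∀ i, ¬ (1 ≤ i ∧ i ≤ n) → T i = 0)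
    (hTsym : ∀ i, (T i)ᵀ = T i) (hAsym : Aᵀ = A)
    (hT1 : ∀ i, 1 ≤ i → i ≤ n → T i *ᵥ (1 : X → ℝ) = q • (1 : X → ℝ))
    (hconn : ∀ f : X → ℝ, (∀ i, 1 ≤ i → i ≤ n → T i *ᵥ f = q • f) → ∀ x y, f x = f y)
    (C : Finset X) (hC : ∀ x ∈ C, ∀ y ∈ C, A x y = 0) :
    (C.card : ℝ) * (1 + Real.sqrt q ^ (n + 1)) ≤ Fintype.card X := by
  have hq0 : 0 < q := by linarith
  set s := Real.sqrt q with hs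
  have hs0 : 0 < s := Real.sqrt_pos.2 hq0
  have hsq : s ^ 2 = q := Real.sq_sqrt hq0.le
  have hE1 : ∀ m ≤ n, ekrE T m *ᵥ (1 : X → ℝ) = q ^ m • (1 : X → ℝ) := by
    intro m
    induction m with
    | zero => intro _; simp [ekrE]
    | succ m ih =>
      intro hm
      rw [ekrE, ← mulVec_mulVec, ih (by omega), mulVec_smul, hT1 _ (by omega) hm, smul_smul, pow_succ]
  have hD1 : ∀ m ≤ n, ekrD T m *ᵥ (1 : X → ℝ) = s ^ (m * (m + 1)) • (1 : X → ℝ) := by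
    intro m
    induction m with
    | zero => intro _; simp [ekrD]
    | succ m ih =>
      intro hm
      rw [ekrD, ← mulVec_mulVec, hE1 _ hm, mulVec_smul, ih (by omega), smul_smul, ← hsq,
        ← pow_mul, ← pow_add]
      congr 2; ring
  set c := s ^ ((n - 1) * (n + 1)) with hc
  set k := s ^ (n * (n + 1)) with hk
  have hkc : k = c * s ^ (n + 1) := by
    rw [hk, hc, ← pow_add]; congr 1
    obtain ⟨m, rfl⟩ : ∃ m, n = m + 1 := ⟨n - 1, by omega⟩
    simp; ring
  have hA1 : A *ᵥ (1 : X → ℝ) = k • (1 : X → ℝ) := by rw [hA]; exact hD1 n le_rfl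
  have hc0 : 0 < c := pow_pos hs0 _
  have hk0 : 0 < k := pow_pos hs0 _
  rcases isEmpty_or_nonempty X with hX | hX
  · have : C = ∅ := Finset.eq_empty_of_isEmpty C
    simp [this]
  obtain ⟨v, hv⟩ : ∃ v : ℝ, v = (Fintype.card X : ℝ) := ⟨_, rfl⟩
  rw [← hv]
  have hv0 : 0 < v := by rw [hv]; exact_mod_cast Fintype.card_pos
  let Jm : Matrix X X ℝ := Matrix.of fun _ _ => 1
  have hJ : ∀ f : X → ℝ, Jm *ᵥ f = (1 ⬝ᵥ f) • (1 : X → ℝ) := by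
    intro f; ext x; simp [Jm, mulVec]; simp [dotProduct]
  let A₁ : Matrix X X ℝ := A - (k / v) • Jm
  have hJsym : Jmᵀ = Jm := by ext; simp [Jm]
  have hA₁sym : A₁ᵀ = A₁ := by simp [A₁, hAsym, hJsym]
  have h11 : (1 : X → ℝ) ⬝ᵥ 1 = v := by simp [hv]
  have hA₁1 : A₁ *ᵥ (1 : X → ℝ) = 0 := by
    simp only [A₁, sub_mulVec, smul_mulVec, hA1, hJ, h11, smul_smul]
    rw [div_mul_cancel₀ _ hv0.ne', sub_self]
  let B : Matrix X X ℝ := A₁ + c • 1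
  have hB : B.IsHermitian := by
    rw [Matrix.IsHermitian, conjTranspose_eq_transpose_of_trivial]
    simp [B, hA₁sym]
  have hpos : B.PosSemidef := by
    rw [hB.posSemidef_iff_eigenvalues_nonneg]
    intro j
    by_contra hneg
    simp only [Pi.zero_apply, not_le] at hneg
    set ν := hB.eigenvalues j with hν
    set g : X → ℝ := (hB.eigenvectorBasis j).ofLp with hgdef
    have hg0 : g ≠ 0 := by
      intro h
      apply hB.eigenvectorBasis.orthonormal.ne_zero j
      ext x
      exact congrFun h x
    have hBg : B *ᵥ g = ν • g := hB.mulVec_eigenvectorBasis j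
    have hA₁g : A₁ *ᵥ g = (ν - c) • g := by
      have : B *ᵥ g = A₁ *ᵥ g + c • g := by simp [B, add_mulVec, smul_mulVec]
      rw [this] at hBg
      rw [sub_smul, ← hBg]; simp
    have hperp : 1 ⬝ᵥ g = 0 := by
      have h1 : (1 : X → ℝ) ⬝ᵥ (A₁ *ᵥ g) = 0 := by
        rw [dotProduct_mulVec, ← mulVec_transpose, hA₁sym, hA₁1, zero_dotProduct]
      rw [hA₁g, dotProduct_smul, smul_eq_mul] at h1
      rcases mul_eq_zero.1 h1 with h | h
      · linarith
      · exact h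
    have hAg : A *ᵥ g = (ν - c) • g := by
      rw [← hA₁g]
      simp [A₁, sub_mulVec, smul_mulVec, hJ, hperp]
    have := ekr_mat n hn T A q hq hquad hA hcomm h0 hTsym hT1 hconn (ν - c) g hg0 hAg hperp
    rw [← hsq, ← pow_mul, mul_comm 2, pow_mul, ← hc] at this
    nlinarith
  let χ : X → ℝ := fun x => if x ∈ C then 1 else 0
  have hχχ : χ ⬝ᵥ χ = C.card := by simp [χ, dotProduct]
  have h1χ : 1 ⬝ᵥ χ = (C.card : ℝ) := by simp [χ, dotProduct]
  have hχA : χ ⬝ᵥ (A *ᵥ χ) = 0 := by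
    simp only [dotProduct, mulVec]
    apply Finset.sum_eq_zero
    intro x _
    by_cases hx : x ∈ C
    · simp only [χ, hx, if_true, one_mul]
      apply Finset.sum_eq_zero
      intro y _
      by_cases hy : y ∈ C
      · simp [hC x hx y hy]
      · simp [hy]
    · simp [χ, hx]
  have hval : χ ⬝ᵥ (B *ᵥ χ) = c * C.card - k / v * C.card * C.card := by
    simp only [B, A₁, add_mulVec, sub_mulVec, smul_mulVec, one_mulVec, dotProduct_add,
      dotProduct_sub, dotProduct_smul, hχA, hχχ, hJ, h1χ, smul_eq_mul]
    rw [dotProduct_comm, h1χ]; ring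
  set m : ℝ := (C.card : ℝ) with hm
  have hm0 : 0 ≤ m := by rw [hm]; positivity
  have hB1 : B *ᵥ (1 : X → ℝ) = c • (1 : X → ℝ) := by
    simp only [B, add_mulVec, hA₁1, smul_mulVec, one_mulVec, zero_add]
  have hBsym : Bᵀ = B := by simp [B, hA₁sym]
  have h1B : (1 : X → ℝ) ⬝ᵥ (B *ᵥ χ) = c * m := by
    rw [dotProduct_mulVec, ← mulVec_transpose, hBsym, hB1, smul_dotProduct, h1χ, smul_eq_mul]
  have hq1 := hpos.dotProduct_mulVec_nonneg (χ - (m / v) • (1 : X → ℝ))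
  have hstar : ∀ f : X → ℝ, star f = f := by intro f; ext; simp
  rw [hstar] at hq1
  simp only [mulVec_sub, mulVec_smul, hB1, sub_dotProduct, dotProduct_sub, smul_dotProduct,
    dotProduct_smul, hval, h1B, h11, smul_eq_mul, dotProduct_comm χ 1, h1χ] at hq1
  rcases hm0.eq_or_lt with h | h
  · rw [← h]; simp [hv0.le]
  have e : c * m - k / v * m * m - m / v * (c * m) - (m / v * (c * m) - m / v * (m / v * (c * v)))
      = (c * m / v) * (v - m * (1 + s ^ (n + 1))) := by
    rw [hkc]; field_simp; ring
  have hq2 : 0 ≤ (c * m / v) * (v - m * (1 + s ^ (n + 1))) := by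
    rw [← e]; linarith
  have := nonneg_of_mul_nonneg_right hq2 (by positivity)
  linarith

section EkrSub
variable {F V : Type*} [Field F] [AddCommGroup V] [Module F V] [FiniteDimensional F V]

lemma ekr_inf_ne_bot (A B S : Submodule F V) (hA : A ≤ S) (hB : B ≤ S)
    (h : finrank F S < finrank F A + finrank F B) : A ⊓ B ≠ ⊥ := by
  intro h0
  have h1 := Submodule.finrank_sup_add_finrank_inf_eq A B
  rw [h0, finrank_bot] at h1
  have h2 := Submodule.finrank_mono (sup_le hA hB)
  omega

lemma ekr_sup_span (X : Submodule F V) (z : V) (hz : z ∉ X) :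
    finrank F (X ⊔ F ∙ z : Submodule F V) = finrank F X + 1 := by
  have hz0 : z ≠ 0 := fun h => hz (h ▸ X.zero_mem)
  have h1 := Submodule.finrank_sup_add_finrank_inf_eq X (F ∙ z)
  have h2 : X ⊓ (F ∙ z) = ⊥ := by
    rw [eq_bot_iff]
    rintro x ⟨hx, hx2⟩
    obtain ⟨c, rfl⟩ := Submodule.mem_span_singleton.1 hx2
    by_cases hc : c = 0
    · simp [hc]
    · exact absurd ((X.smul_mem_iff hc).1 hx) hz
  rw [h2, finrank_bot, finrank_span_singleton hz0] at h1
  omega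

lemma ekr_between (X Z : Submodule F V) (h : X ≤ Z) (d : ℕ) (h1 : finrank F X ≤ d)
    (h2 : d ≤ finrank F X + 1) (h3 : d ≤ finrank F Z) :
    ∃ Y : Submodule F V, X ≤ Y ∧ Y ≤ Z ∧ finrank F Y = d := by
  by_cases hd : d = finrank F X
  · exact ⟨X, le_rfl, h, hd.symm⟩
  · have : ∃ z ∈ Z, z ∉ X := by
      by_contra hcon
      push Not at hcon
      have := Submodule.finrank_mono (show Z ≤ X from hcon)
      omega
    obtain ⟨z, hz, hzX⟩ := this
    refine ⟨X ⊔ F ∙ z, le_sup_left, sup_le h ?_, ?_⟩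
    · rwa [Submodule.span_singleton_le_iff_mem]
    · rw [ekr_sup_span X z hzX]; omega

lemma ekr_key (Wm W W' Wp Xm X : Submodule F V) (h1 : Wm ≤ W) (h2 : Wm ≤ W')
    (h3 : W ≤ Wp) (h4 : W' ≤ Wp) (hd : finrank F W = finrank F Wm + 1)
    (hd' : finrank F W' = finrank F Wm + 1) (hne : W ≠ W') (hX : Xm ≤ X)
    (hdX : finrank F X ≤ finrank F Xm + 1) (hXm : Xm ⊓ Wp = ⊥) (hWm : Wm ⊓ X = ⊥)
    (hW' : W' ⊓ X ≠ ⊥) : W ⊓ X = ⊥ := by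
  obtain ⟨y, ⟨hyW, hyX⟩, hy0⟩ := Submodule.exists_mem_ne_zero_of_ne_bot hW'
  have hyXm : y ∉ Xm := fun hy => hy0 (by
    have : y ∈ Xm ⊓ Wp := ⟨hy, h4 hyW⟩
    rw [hXm] at this; simpa using this)
  have hXeq : Xm ⊔ F ∙ y = X := by
    apply Submodule.eq_of_le_of_finrank_le
    · exact sup_le hX (by rwa [Submodule.span_singleton_le_iff_mem])
    · rw [ekr_sup_span _ _ hyXm]; exact hdX
  have hinf : W ⊓ W' = Wm := by
    symm
    apply Submodule.eq_of_le_of_finrank_le (le_inf h1 h2)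
    have : W ⊓ W' < W := by
      apply lt_of_le_of_ne inf_le_left
      intro h
      exact hne (Submodule.eq_of_le_of_finrank_le (inf_eq_left.1 h) (by omega))
    have := Submodule.finrank_lt_finrank_of_lt this
    omega
  rw [eq_bot_iff]
  rintro x ⟨hxW, hxX⟩
  rw [SetLike.mem_coe, ← hXeq] at hxX
  obtain ⟨z, hz, w, hw, rfl⟩ := Submodule.mem_sup.1 hxX
  obtain ⟨c, rfl⟩ := Submodule.mem_span_singleton.1 hw
  have hz2 : z ∈ Xm ⊓ Wp := ⟨hz, by
    have := Wp.sub_mem (h3 hxW) (Wp.smul_mem c (h4 hyW))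
    simpa using this⟩
  rw [hXm] at hz2
  have hz0 : z = 0 := by simpa using hz2
  subst hz0
  rw [zero_add] at hxW ⊢
  have : c • y ∈ Wm ⊓ X := ⟨hinf ▸ ⟨hxW, W'.smul_mem c hyW⟩, X.smul_mem c hyX⟩
  rwa [hWm] at this

lemma ekr_count [Finite F] (Wm Wp : Submodule F V) (h : Wm ≤ Wp) (i : ℕ)
    (h1 : finrank F Wm = i) (h2 : finrank F Wp = i + 2) :
    Nat.card {X : Submodule F V // Wm ≤ X ∧ X ≤ Wp ∧ finrank F X = i + 1} = Nat.card F + 1 := by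
  classical
  have : Finite V := Module.finite_of_finite F
  have : Fintype V := Fintype.ofFinite V
  have : Fintype (Submodule F V) := Fintype.ofFinite _
  set q := Nat.card F with hq
  have hq1 : 1 < q := Finite.one_lt_card
  have hcard : ∀ X : Submodule F V, (Finset.univ.filter (fun x => x ∈ X)).card = q ^ finrank F X := by
    intro X
    rw [← Module.natCard_eq_pow_finrank (K := F) (V := X), Nat.card_eq_fintype_card,
      Fintype.card_subtype]
  have hdiff : ∀ X : Submodule F V, Wm ≤ X →
      (Finset.univ.filter (fun x => x ∈ X ∧ x ∉ Wm)).card + q ^ i = q ^ finrank F X := by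
    intro X hX
    rw [← hcard X, ← h1, ← hcard Wm]
    rw [← Finset.card_union_of_disjoint]
    · congr 1
      ext x
      simp only [Finset.mem_union, Finset.mem_filter, Finset.mem_univ, true_and]
      constructor
      · rintro (h | h)
        · exact h.1
        · exact hX h
      · intro h; by_cases hx : x ∈ Wm
        · exact Or.inr hx
        · exact Or.inl ⟨h, hx⟩
    · rw [Finset.disjoint_left]
      intro x; simp
  set t : Finset (Submodule F V) :=
    Finset.univ.filter (fun X => Wm ≤ X ∧ X ≤ Wp ∧ finrank F X = i + 1) with ht
  have hfib := Finset.card_eq_sum_card_fiberwise (f := fun x : V => Wm ⊔ F ∙ x)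
    (s := Finset.univ.filter (fun x => x ∈ Wp ∧ x ∉ Wm)) (t := t) (by
      intro x hx
      simp only [Finset.coe_filter, Finset.mem_univ, true_and, Set.mem_ofPred_eq] at hx
      simp only [ht, Finset.coe_filter, Finset.mem_univ, true_and, Set.mem_ofPred_eq]
      refine ⟨le_sup_left, sup_le h ?_, ?_⟩
      · rw [Submodule.span_singleton_le_iff_mem]; exact hx.1
      · rw [ekr_sup_span _ _ hx.2, h1])
  have hfib2 : ∀ X ∈ t, ((Finset.univ.filter (fun x => x ∈ Wp ∧ x ∉ Wm)).filter
      (fun x => Wm ⊔ F ∙ x = X)).card = q ^ (i + 1) - q ^ i := by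
    intro X hX
    simp only [ht, Finset.mem_filter, Finset.mem_univ, true_and] at hX
    have := hdiff X hX.1
    rw [hX.2.2] at this
    rw [← this, Nat.add_sub_cancel]
    congr 1
    ext x
    simp only [Finset.mem_filter, Finset.mem_univ, true_and]
    constructor
    · rintro ⟨⟨_, h4⟩, rfl⟩
      exact ⟨Submodule.mem_sup_right (Submodule.mem_span_singleton_self x), h4⟩
    · rintro ⟨h3, h4⟩
      refine ⟨⟨hX.2.1 h3, h4⟩, ?_⟩
      apply Submodule.eq_of_le_of_finrank_le
      · exact sup_le hX.1 (by rwa [Submodule.span_singleton_le_iff_mem])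
      · rw [ekr_sup_span _ _ h4]; omega
  rw [Finset.sum_congr rfl hfib2, Finset.sum_const, smul_eq_mul] at hfib
  have h3 := hdiff Wp h
  rw [h2, hfib] at h3
  rw [Nat.card_eq_fintype_card, Fintype.card_subtype, ← ht]
  have hqi : 0 < q ^ i := by positivity
  obtain ⟨r, hr⟩ : ∃ r, q = r + 2 := ⟨q - 2, by omega⟩
  have e1 : q ^ (i + 1) - q ^ i = q ^ i * (r + 1) := by
    rw [pow_succ, ← Nat.mul_sub_one, hr]; rfl
  rw [e1] at h3
  have e2 : t.card * (r + 1) + 1 = q ^ 2 := by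
    apply Nat.eq_of_mul_eq_mul_left hqi
    rw [← pow_add, ← h3]; ring
  have e3 : t.card * (r + 1) = (q + 1) * (r + 1) := by
    have : (q + 1) * (r + 1) + 1 = q ^ 2 := by rw [hr]; ring
    omega
  exact Nat.eq_of_mul_eq_mul_right (by omega) e3

end EkrSub

/-- full flags -/
@[ext]
structure EkrFlag (F V : Type*) [Field F] [AddCommGroup V] [Module F V] (n : ℕ) where
  U : ℕ → Submodule F V
  dim : ∀ k, finrank F (U k) = min k (n + 1)
  mono : Monotone U

namespace EkrFlag
set_option linter.unusedSectionVars false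
variable {F V : Type*} [Field F] [AddCommGroup V] [Module F V] [FiniteDimensional F V] {n : ℕ}

lemma U_zero (W : EkrFlag F V n) : W.U 0 = ⊥ := by
  have := W.dim 0
  rw [Nat.zero_min] at this
  exact Submodule.finrank_eq_zero.1 this

lemma U_top (hV : finrank F V = n + 1) (W : EkrFlag F V n) (k : ℕ) (hk : n + 1 ≤ k) : W.U k = ⊤ := by
  apply Submodule.eq_top_of_finrank_eq
  rw [W.dim, hV]; omega

lemma dim' (W : EkrFlag F V n) (k : ℕ) (hk : k ≤ n + 1) : finrank F (W.U k) = k := by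
  rw [W.dim]; omega

def adj (i : ℕ) (U W : EkrFlag F V n) : Prop := ∀ k, k ≠ i → U.U k = W.U k

lemma adj_symm {i : ℕ} {U W : EkrFlag F V n} (h : adj i U W) : adj i W U :=
  fun k hk => (h k hk).symm

lemma adj_refl (i : ℕ) (U : EkrFlag F V n) : adj i U U := fun _ _ => rfl

lemma adj_trans {i : ℕ} {U W X : EkrFlag F V n} (h : adj i U W) (h' : adj i W X) : adj i U X :=
  fun k hk => (h k hk).trans (h' k hk)

lemma adj_eq {i : ℕ} {U W : EkrFlag F V n} (h : adj i U W) (h' : U.U i = W.U i) : U = W := by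
  ext1; funext k
  by_cases hk : k = i
  · rw [hk, h']
  · exact h k hk

lemma adj_out (hV : finrank F V = n + 1) {i : ℕ} (hi : ¬ (1 ≤ i ∧ i ≤ n)) {U W : EkrFlag F V n}
    (h : adj i U W) : U = W := by
  apply adj_eq h
  by_cases h0 : i = 0
  · rw [h0, U_zero, U_zero]
  · rw [U_top hV _ _ (by omega), U_top hV _ _ (by omega)]

def upd (W : EkrFlag F V n) (i : ℕ) (h1 : 1 ≤ i) (h2 : i ≤ n) (X : Submodule F V)
    (hX : finrank F X = i) (hl : W.U (i - 1) ≤ X) (hr : X ≤ W.U (i + 1)) : EkrFlag F V n where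
  U := Function.update W.U i X
  dim := by
    intro k
    by_cases hk : k = i
    · subst hk; rw [Function.update_self, hX]; omega
    · rw [Function.update_of_ne hk, W.dim]
  mono := by
    apply monotone_nat_of_le_succ
    intro k
    by_cases hk : k = i
    · subst hk
      rw [Function.update_self, Function.update_of_ne (by omega)]; exact hr
    · rw [Function.update_of_ne hk]
      by_cases hk2 : k + 1 = i
      · subst hk2
        rw [Function.update_self]; exact hl
      · rw [Function.update_of_ne hk2]; exact W.mono (by omega)

lemma upd_U (W : EkrFlag F V n) (i : ℕ) (h1 : 1 ≤ i) (h2 : i ≤ n) (X : Submodule F V)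
    (hX : finrank F X = i) (hl : W.U (i - 1) ≤ X) (hr : X ≤ W.U (i + 1)) :
    (W.upd i h1 h2 X hX hl hr).U i = X := by simp [upd]

lemma upd_U_ne (W : EkrFlag F V n) (i : ℕ) (h1 : 1 ≤ i) (h2 : i ≤ n) (X : Submodule F V)
    (hX : finrank F X = i) (hl : W.U (i - 1) ≤ X) (hr : X ≤ W.U (i + 1)) (k : ℕ) (hk : k ≠ i) :
    (W.upd i h1 h2 X hX hl hr).U k = W.U k := by simp [upd, Function.update_of_ne hk]

instance [Finite F] : Finite (EkrFlag F V n) := by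
  have : Finite V := Module.finite_of_finite F
  apply Finite.of_injective (β := Fin (n + 2) → Submodule F V) (fun W k => W.U k)
  intro U W h
  have key : ∀ X : EkrFlag F V n, ∀ k, n + 1 ≤ k → X.U (n + 1) = X.U k := by
    intro X k hk
    apply Submodule.eq_of_le_of_finrank_eq (X.mono hk)
    rw [X.dim, X.dim]; omega
  ext1; funext k
  by_cases hk : k < n + 2
  · exact congrFun h ⟨k, hk⟩
  · rw [← key U k (by omega), ← key W k (by omega)]
    exact congrFun h ⟨n + 1, by omega⟩

lemma card_adj [Finite F] (U : EkrFlag F V n) (i : ℕ) (h1 : 1 ≤ i) (h2 : i ≤ n) :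
    Nat.card {W : EkrFlag F V n // adj i U W} = Nat.card F + 1 := by
  rw [← ekr_count (U.U (i - 1)) (U.U (i + 1)) (U.mono (by omega)) (i - 1) (U.dim' _ (by omega))
    (by rw [U.dim' _ (by omega)]; omega)]
  rw [show i - 1 + 1 = i by omega]
  apply Nat.card_congr
  refine Equiv.ofBijective (fun W => ⟨W.1.U i, ?_, ?_, W.1.dim' _ (by omega)⟩) ⟨?_, ?_⟩
  · rw [W.2 _ (by omega)]; exact W.1.mono (by omega)
  · rw [W.2 _ (by omega)]; exact W.1.mono (by omega)
  · rintro ⟨W, hW⟩ ⟨W', hW'⟩ h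
    apply Subtype.ext
    exact adj_eq (adj_trans (adj_symm hW) hW') (congrArg Subtype.val h)
  · rintro ⟨X, hl, hr, hX⟩
    exact ⟨⟨U.upd i h1 h2 X hX hl hr, fun k hk => (U.upd_U_ne i h1 h2 X hX hl hr k hk).symm⟩,
      Subtype.ext (U.upd_U i h1 h2 X hX hl hr)⟩

/-- extension of partial flags -/
lemma exists_ext (hV : finrank F V = n + 1) (J : Finset ℕ) (P : ℕ → Submodule F V)
    (hdim : ∀ k ∈ J, finrank F (P k) = k)
    (hmono : ∀ k ∈ J, ∀ l ∈ J, k ≤ l → P k ≤ P l) :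
    ∃ W : EkrFlag F V n, ∀ k ∈ J, W.U k = P k := by
  classical
  let Z : ℕ → Submodule F V := fun k => ⨅ b ∈ J, ⨅ _ : k ≤ b, P b
  have hZle : ∀ k b, b ∈ J → k ≤ b → Z k ≤ P b := fun k b hb hk =>
    iInf_le_of_le b (iInf_le_of_le hb (iInf_le_of_le hk le_rfl))
  have hZmono : Monotone Z := by
    intro k l hkl
    refine le_iInf fun b => le_iInf fun hb => le_iInf fun h => hZle k b hb (hkl.trans h)
  have hZdim : ∀ k, min k (n + 1) ≤ finrank F (Z k) := by
    intro k
    by_cases h : ∃ b, b ∈ J ∧ k ≤ b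
    · have hs := Nat.find_spec h
      have hmin : P (Nat.find h) ≤ Z k := by
        refine le_iInf fun b => le_iInf fun hb => le_iInf fun hk => ?_
        exact hmono _ hs.1 _ hb (Nat.find_min' h ⟨hb, hk⟩)
      have := Submodule.finrank_mono hmin
      rw [hdim _ hs.1] at this
      omega
    · have : Z k = ⊤ := by
        rw [eq_top_iff]
        refine le_iInf fun b => le_iInf fun hb => le_iInf fun hk => absurd ⟨b, hb, hk⟩ h
      rw [this, finrank_top, hV]; omega
  have step : ∀ k (X : {X : Submodule F V // finrank F X = min k (n + 1) ∧ X ≤ Z k}),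
      ∃ Y : {X : Submodule F V // finrank F X = min (k + 1) (n + 1) ∧ X ≤ Z (k + 1)},
        X.1 ≤ Y.1 := by
    rintro k ⟨X, h1, h2⟩
    obtain ⟨Y, h3, h4, h5⟩ := ekr_between X (Z (k + 1)) (h2.trans (hZmono (by omega)))
      (min (k + 1) (n + 1)) (by omega) (by omega) (hZdim _)
    exact ⟨⟨Y, h5, h4⟩, h3⟩
  choose nxt hnxt using step
  let seq : (k : ℕ) → {X : Submodule F V // finrank F X = min k (n + 1) ∧ X ≤ Z k} :=
    fun k => Nat.rec ⟨⊥, by simp, bot_le⟩ (fun k X => nxt k X) k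
  refine ⟨⟨fun k => (seq k).1, fun k => (seq k).2.1, monotone_nat_of_le_succ fun k => hnxt k (seq k)⟩,
    ?_⟩
  intro k hk
  apply Submodule.eq_of_le_of_finrank_le ((seq k).2.2.trans (hZle k k hk le_rfl))
  have h1 : finrank F (P k) = k := hdim k hk
  have h2 : finrank F (P k) ≤ n + 1 := hV ▸ Submodule.finrank_le _
  rw [(seq k).2.1]; omega

lemma connected {α : Type*} (hV : finrank F V = n + 1) (f : EkrFlag F V n → α)
    (hf : ∀ i, 1 ≤ i → i ≤ n → ∀ U W, adj i U W → f U = f W) (U W : EkrFlag F V n) :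
    f U = f W := by
  have key : ∀ m, ∀ U W : EkrFlag F V n, (∀ k, m ≤ k → U.U k = W.U k) → f U = f W := by
    intro m
    induction m with
    | zero =>
      intro U W h
      have : U = W := by ext1; funext k; exact h k (Nat.zero_le _)
      rw [this]
    | succ m ih =>
      intro U W h
      by_cases hUW : U.U m = W.U m
      · apply ih
        intro k hk
        rcases hk.eq_or_lt with rfl | hk
        · exact hUW
        · exact h k hk
      have hm1 : 1 ≤ m := by
        by_contra h0
        have : m = 0 := by omega
        subst this
        exact hUW (by rw [U_zero, U_zero])
      have hmn : m ≤ n := by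
        by_contra h0
        exact hUW (by rw [U_top hV _ _ (by omega), U_top hV _ _ (by omega)])
      have hWm : W.U m ≤ U.U (m + 1) := by rw [h _ le_rfl]; exact W.mono (by omega)
      set X := U.U m ⊓ W.U m with hX
      have hXd : finrank F X = m - 1 := by
        have h1 := Submodule.finrank_sup_add_finrank_inf_eq (U.U m) (W.U m)
        rw [U.dim' m (by omega), W.dim' m (by omega), ← hX] at h1
        have h2 := Submodule.finrank_mono (sup_le (U.mono (show m ≤ m + 1 by omega)) hWm)
        rw [U.dim' (m + 1) (by omega)] at h2
        have h3 : m < finrank F (U.U m ⊔ W.U m : Submodule F V) := by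
          have hlt : U.U m < U.U m ⊔ W.U m := by
            apply lt_of_le_of_ne le_sup_left
            intro he
            have hle : W.U m ≤ U.U m := by rw [he]; exact le_sup_right
            exact hUW (Submodule.eq_of_le_of_finrank_eq hle (by
              rw [U.dim' m (by omega), W.dim' m (by omega)])).symm
          have := Submodule.finrank_lt_finrank_of_lt hlt
          rwa [U.dim' m (by omega)] at this
        omega
      obtain ⟨U', hU'⟩ := exists_ext hV (Finset.Icc (m - 1) (n + 1))
        (fun k => if k = m - 1 then X else U.U k) (by
          intro k hk
          rw [Finset.mem_Icc] at hk
          by_cases hk1 : k = m - 1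
          · rw [if_pos hk1, hXd, hk1]
          · rw [if_neg hk1]; exact U.dim' k hk.2) (by
          intro k hk l hl hkl
          rw [Finset.mem_Icc] at hk hl
          split_ifs with hk1 hl1 hl1
          · exact le_rfl
          · exact inf_le_left.trans (U.mono (by omega))
          · omega
          · exact U.mono hkl)
      have hU'1 : U'.U (m - 1) = X := by
        rw [hU' _ (Finset.mem_Icc.2 ⟨le_rfl, by omega⟩), if_pos rfl]
      have hU'2 : ∀ k, m ≤ k → U'.U k = U.U k := by
        intro k hk
        by_cases hk2 : k ≤ n + 1
        · rw [hU' _ (Finset.mem_Icc.2 ⟨by omega, hk2⟩), if_neg (by omega)]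
        · rw [U_top hV _ _ (by omega), U_top hV _ _ (by omega)]
      have e1 : f U = f U' := ih _ _ fun k hk => (hU'2 k hk).symm
      have hl : U'.U (m - 1) ≤ W.U m := by rw [hU'1]; exact inf_le_right
      have hr : W.U m ≤ U'.U (m + 1) := by rw [hU'2 _ (by omega)]; exact hWm
      have e2 : f U' = f (U'.upd m hm1 hmn (W.U m) (W.dim' m (by omega)) hl hr) := by
        apply hf m hm1 hmn
        intro k hk
        rw [upd_U_ne _ _ _ _ _ _ _ _ _ hk]
      rw [e1, e2]
      apply ih
      intro k hk
      by_cases hkm : k = m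
      · subst hkm; rw [upd_U]
      · rw [upd_U_ne _ _ _ _ _ _ _ _ _ hkm, hU'2 _ hk]
        exact h k (by omega)
  exact key (n + 1) U W fun k hk => by rw [U_top hV _ _ hk, U_top hV _ _ hk]

lemma exists_basis (hV : finrank F V = n + 1) (W : EkrFlag F V n) :
    ∃ b : Basis (Fin (n + 1)) F V, ∀ k ≤ n + 1, W.U k = Submodule.span F (b '' {i | (i : ℕ) < k}) := by
  have h : ∀ i : Fin (n + 1), ∃ x ∈ W.U (i + 1), x ∉ W.U i := by
    intro i
    by_contra hcon
    push Not at hcon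
    have := Submodule.finrank_mono (show W.U (i + 1) ≤ W.U i from hcon)
    rw [W.dim' _ (by omega), W.dim' _ (by omega)] at this
    omega
  choose e he1 he2 using h
  have hspan : ∀ k ≤ n + 1, W.U k = Submodule.span F (e '' {i | (i : ℕ) < k}) := by
    intro k
    induction k with
    | zero => intro _; simp [U_zero]
    | succ k ih =>
      intro hk
      have hset : {i : Fin (n + 1) | (i : ℕ) < k + 1} =
          {i : Fin (n + 1) | (i : ℕ) < k} ∪ {⟨k, by omega⟩} := by
        ext i
        simp only [Set.mem_ofPred_eq, Set.mem_union, Set.mem_singleton_iff, Fin.ext_iff]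
        omega
      rw [hset, Set.image_union, Submodule.span_union, ← ih (by omega), Set.image_singleton]
      symm
      apply Submodule.eq_of_le_of_finrank_le
      · apply sup_le (W.mono (by omega))
        rw [Submodule.span_singleton_le_iff_mem]; exact he1 ⟨k, by omega⟩
      · rw [ekr_sup_span _ _ (he2 ⟨k, by omega⟩), W.dim' _ hk, W.dim' _ (by omega)]
  have htop : ⊤ ≤ Submodule.span F (Set.range e) := by
    rw [← W.U_top hV (n + 1) le_rfl, hspan _ le_rfl]
    exact Submodule.span_mono (Set.image_subset_range _ _)
  refine ⟨basisOfTopLeSpanOfCardEqFinrank e htop (by simp [hV]), ?_⟩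
  simpa using hspan

lemma transitive (hV : finrank F V = n + 1) (U W : EkrFlag F V n) :
    ∃ g : V ≃ₗ[F] V, ∀ k, (U.U k).map (g : V →ₗ[F] V) = W.U k := by
  obtain ⟨b, hb⟩ := U.exists_basis hV
  obtain ⟨b', hb'⟩ := W.exists_basis hV
  refine ⟨b.equiv b' (Equiv.refl _), fun k => ?_⟩
  by_cases hk : k ≤ n + 1
  · rw [hb k hk, hb' k hk, Submodule.map_span, ← Set.image_comp]
    congr 2
    funext i
    simp
  · rw [U_top hV _ _ (by omega), U_top hV _ _ (by omega)]
    simp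

def mapG (g : V ≃ₗ[F] V) (U : EkrFlag F V n) : EkrFlag F V n where
  U := fun k => (U.U k).map (g : V →ₗ[F] V)
  dim := fun k => by rw [← U.dim k]; exact LinearEquiv.finrank_map_eq g _
  mono := fun _ _ h => Submodule.map_mono (U.mono h)

lemma mapG_injective (g : V ≃ₗ[F] V) : Function.Injective (mapG g : EkrFlag F V n → _) := by
  intro U W h
  ext1; funext k
  have := congrArg (fun X => X.U k) h
  exact Submodule.map_injective_of_injective g.injective this

end EkrFlag

namespace EkrFlag
set_option linter.unusedSectionVars false
variable {F V : Type*} [Field F] [AddCommGroup V] [Module F V] [FiniteDimensional F V] {n : ℕ}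

open Classical in
noncomputable def mat {X : Type*} (R : X → X → Prop) : Matrix X X ℝ :=
  Matrix.of fun x y => if R x y then 1 else 0

noncomputable def T (i : ℕ) : Matrix (EkrFlag F V n) (EkrFlag F V n) ℝ :=
  mat fun U W => adj i U W ∧ U ≠ W

def Opp (U W : EkrFlag F V n) : Prop := ∀ i j, i + j = n + 1 → U.U i ⊓ W.U j = ⊥

lemma Opp.symm {U W : EkrFlag F V n} (h : Opp U W) : Opp W U := fun i j hij => by
  rw [inf_comm]; exact h j i (by omega)

lemma T_transpose (i : ℕ) : (T i : Matrix (EkrFlag F V n) (EkrFlag F V n) ℝ).transpose = T i := by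
  ext U W
  simp only [T, mat, Matrix.transpose_apply, Matrix.of_apply]
  congr 1
  exact propext ⟨fun h => ⟨adj_symm h.1, h.2.symm⟩, fun h => ⟨adj_symm h.1, h.2.symm⟩⟩

lemma T_out (hV : finrank F V = n + 1) (i : ℕ) (hi : ¬ (1 ≤ i ∧ i ≤ n)) :
    (T i : Matrix (EkrFlag F V n) (EkrFlag F V n) ℝ) = 0 := by
  ext U W
  simp only [T, mat, Matrix.of_apply, Matrix.zero_apply, ite_eq_right_iff]
  rintro ⟨h1, h2⟩
  exact absurd (adj_out hV hi h1) h2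

lemma mat_mul_T [Fintype (EkrFlag F V n)] (i : ℕ) (R S : EkrFlag F V n → EkrFlag F V n → Prop)
    (h1 : ∀ U W, S U W → ∃ W', R U W' ∧ adj i W' W)
    (h2 : ∀ U W' W, R U W' → adj i W' W → W' ≠ W → S U W)
    (h3 : ∀ U W, R U W → ¬ S U W) : mat S = mat R * T i := by
  classical
  ext U W
  rw [Matrix.mul_apply]
  simp only [T, mat, Matrix.of_apply]
  by_cases hS : S U W
  · obtain ⟨W', hR, hadj⟩ := h1 U W hS
    have hne : W' ≠ W := by rintro rfl; exact h3 _ _ hR hS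
    rw [if_pos hS, Finset.sum_eq_single W']
    · rw [if_pos hR, if_pos ⟨hadj, hne⟩, one_mul]
    · intro W'' _ hW''
      by_cases hR2 : R U W''
      · by_cases hadj2 : adj i W'' W
        · exfalso
          exact h3 _ _ hR2 (h2 U W' W'' hR (adj_trans hadj (adj_symm hadj2)) (Ne.symm hW''))
        · rw [if_neg (fun h : adj i W'' W ∧ W'' ≠ W => hadj2 h.1), mul_zero]
      · rw [if_neg hR2, zero_mul]
    · intro h; exact absurd (Finset.mem_univ _) h
  · rw [if_neg hS]
    symm
    apply Finset.sum_eq_zero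
    intro W' _
    by_cases hR : R U W'
    · rw [if_neg (fun h : adj i W' W ∧ W' ≠ W => hS (h2 U W' W hR h.1 h.2)), mul_zero]
    · rw [if_neg hR, zero_mul]

def Q (m j : ℕ) (U W : EkrFlag F V n) : Prop :=
  (∀ k, m + 1 ≤ k → W.U k = U.U k) ∧ (∀ k, j < k → k ≤ m → W.U k ⊓ U.U (m + 1 - k) = ⊥) ∧
    (∀ k, k ≤ j → W.U k ⊓ U.U (m - k) = ⊥ ∧ W.U k ≤ U.U m)

lemma Q_step [Fintype (EkrFlag F V n)] (m j : ℕ) (hj : j + 1 ≤ m) (hm : m ≤ n) :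
    (mat (Q m j) : Matrix (EkrFlag F V n) _ ℝ) = mat (Q m (j + 1)) * T (j + 1) := by
  apply mat_mul_T
  · rintro U W ⟨hA, hB, hC⟩
    -- dims
    have hp : W.U (j + 2) ⊓ U.U (m - (j + 1)) = ⊥ := by
      by_cases h : j + 2 ≤ m
      · have := hB (j + 2) (by omega) h
        rwa [show m + 1 - (j + 2) = m - (j + 1) by omega] at this
      · rw [show m - (j + 1) = 0 by omega, U_zero, inf_bot_eq]
    have hple : W.U (j + 2) ≤ U.U (m + 1) := by
      rw [← hA (m + 1) le_rfl]; exact W.mono (by omega)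
    have hWj := hC j le_rfl
    obtain ⟨Y, hY1, hY2, hY3⟩ := ekr_between (W.U j) (W.U (j + 2) ⊓ U.U m)
      (le_inf (W.mono (by omega)) hWj.2) (j + 1) (by rw [W.dim' _ (by omega)]; omega)
      (by rw [W.dim' _ (by omega)]) (by
        have h1 := Submodule.finrank_sup_add_finrank_inf_eq (W.U (j + 2)) (U.U m)
        have h2 := Submodule.finrank_mono (sup_le hple (U.mono (show m ≤ m + 1 by omega)))
        rw [W.dim' _ (by omega), U.dim' _ (by omega)] at h1
        rw [U.dim' _ (by omega)] at h2
        omega)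
    refine ⟨W.upd (j + 1) (by omega) (by omega) Y hY3 hY1 (hY2.trans inf_le_left), ⟨?_, ?_, ?_⟩, ?_⟩
    · intro k hk
      rw [upd_U_ne _ _ _ _ _ _ _ _ _ (by omega)]; exact hA k hk
    · intro k hk hk2
      rw [upd_U_ne _ _ _ _ _ _ _ _ _ (by omega)]; exact hB k (by omega) hk2
    · intro k hk
      by_cases hk1 : k = j + 1
      · subst hk1
        rw [upd_U]
        refine ⟨?_, hY2.trans inf_le_right⟩
        rw [eq_bot_iff, ← hp]
        exact inf_le_inf_right _ (hY2.trans inf_le_left)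
      · rw [upd_U_ne _ _ _ _ _ _ _ _ _ hk1]; exact hC k (by omega)
    · intro k hk
      rw [upd_U_ne _ _ _ _ _ _ _ _ _ hk]
  · rintro U W' W ⟨hA, hB, hC⟩ hadj hne
    have hp : U.U (m - (j + 1)) ⊓ W'.U (j + 2) = ⊥ := by
      by_cases h : j + 2 ≤ m
      · have := hB (j + 2) (by omega) h
        rwa [show m + 1 - (j + 2) = m - (j + 1) by omega, inf_comm] at this
      · rw [show m - (j + 1) = 0 by omega, U_zero, bot_inf_eq]
    refine ⟨?_, ?_, ?_⟩
    · intro k hk; rw [← hadj k (by omega)]; exact hA k hk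
    · intro k hk hk2
      by_cases hk1 : k = j + 1
      · subst hk1
        rw [show m + 1 - (j + 1) = m - j by omega]
        apply ekr_key (W'.U j) (W.U (j + 1)) (W'.U (j + 1)) (W'.U (j + 2)) (U.U (m - (j + 1))) (U.U (m - j))
        · rw [hadj j (by omega)]; exact W.mono (by omega)
        · exact W'.mono (by omega)
        · rw [hadj (j + 2) (by omega)]; exact W.mono (by omega)
        · exact W'.mono (by omega)
        · rw [W.dim' _ (by omega), W'.dim' _ (by omega)]
        · rw [W'.dim' _ (by omega), W'.dim' _ (by omega)]
        · intro h; exact hne (adj_eq hadj h.symm)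
        · exact U.mono (by omega)
        · rw [U.dim' _ (by omega), U.dim' _ (by omega)]; omega
        · exact hp
        · exact (hC j (by omega)).1
        · apply ekr_inf_ne_bot _ _ (U.U m) (hC (j + 1) le_rfl).2 (U.mono (by omega))
          rw [W'.dim' _ (by omega), U.dim' _ (by omega), U.dim' _ (by omega)]; omega
      · rw [← hadj k hk1]; exact hB k (by omega) hk2
    · intro k hk; rw [← hadj k (by omega)]; exact hC k (by omega)
  · rintro U W ⟨_, _, hC⟩ ⟨_, hB, _⟩
    have h1 := hB (j + 1) (by omega) hj
    refine ekr_inf_ne_bot (W.U (j + 1)) (U.U (m + 1 - (j + 1))) (U.U m) (hC (j + 1) le_rfl).2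
      (U.mono (by omega)) ?_ h1
    rw [W.dim' _ (by omega), U.dim' _ (by omega), U.dim' _ (by omega)]; omega

lemma Q_E [Fintype (EkrFlag F V n)] [DecidableEq (EkrFlag F V n)] (m j : ℕ) (hj : j ≤ m)
    (hm : m ≤ n) :
    (mat (Q m 0) : Matrix (EkrFlag F V n) _ ℝ) = mat (Q m j) * ekrE T j := by
  induction j with
  | zero => simp [ekrE]
  | succ j ih => rw [ih (by omega), Q_step m j hj hm, ekrE, Matrix.mul_assoc]

lemma Q_shift (m : ℕ) (hm : m + 1 ≤ n) (U W : EkrFlag F V n) :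
    Q (m + 1) (m + 1) U W ↔ Q m 0 U W := by
  constructor
  · rintro ⟨hA, -, hC⟩
    refine ⟨?_, ?_, ?_⟩
    · intro k hk
      rcases hk.eq_or_lt with rfl | hk
      · apply Submodule.eq_of_le_of_finrank_eq (hC _ le_rfl).2
        rw [W.dim, U.dim]
      · exact hA k hk
    · intro k _ hk; exact (hC k (by omega)).1
    · intro k hk
      have : k = 0 := by omega
      subst this
      rw [U_zero]; simp
  · rintro ⟨hA, hB, -⟩
    refine ⟨fun k hk => hA k (by omega), fun k _ _ => by omega, ?_⟩
    intro k hk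
    refine ⟨?_, ?_⟩
    · by_cases hk0 : k = 0
      · subst hk0; rw [U_zero, bot_inf_eq]
      · by_cases hk1 : k = m + 1
        · subst hk1; rw [Nat.sub_self, U_zero, inf_bot_eq]
        · exact hB k (by omega) (by omega)
    · rw [← hA (m + 1) le_rfl]; exact W.mono hk

lemma Q_D [Fintype (EkrFlag F V n)] [DecidableEq (EkrFlag F V n)] (m : ℕ) (hm : m ≤ n) :
    (mat (Q m 0) : Matrix (EkrFlag F V n) _ ℝ) = ekrD T m := by
  induction m with
  | zero =>
    ext U W
    simp only [mat, Matrix.of_apply, ekrD, Matrix.one_apply]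
    congr 1
    apply propext
    constructor
    · rintro ⟨hA, -, -⟩
      ext1; funext k
      by_cases hk : k = 0
      · rw [hk, U_zero, U_zero]
      · exact (hA k (by omega)).symm
    · rintro rfl
      refine ⟨fun _ _ => rfl, fun k _ _ => by omega, fun k hk => ?_⟩
      have : k = 0 := by omega
      subst this
      rw [U_zero]; simp
  | succ m ih =>
    rw [ekrD, ← ih (by omega), Q_E (m + 1) (m + 1) le_rfl hm]
    congr 2
    funext U W
    exact propext (Q_shift m hm U W)

lemma Q_opp (hV : finrank F V = n + 1) (U W : EkrFlag F V n) : Q n 0 U W ↔ Opp U W := by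
  constructor
  · rintro ⟨-, hB, -⟩ i j hij
    by_cases hj : j = 0
    · subst hj; rw [W.U_zero, inf_bot_eq]
    by_cases hi : i = 0
    · subst hi; rw [U.U_zero, bot_inf_eq]
    have := hB j (by omega) (by omega)
    rw [inf_comm, show i = n + 1 - j by omega]; exact this
  · intro h
    refine ⟨fun k hk => by rw [U_top hV _ _ hk, U_top hV _ _ hk], ?_, ?_⟩
    · intro k _ hk
      rw [inf_comm]; exact h _ _ (by omega)
    · intro k hk
      have : k = 0 := by omega
      subst this
      rw [U_zero]; simp

lemma opp_eq_D [Fintype (EkrFlag F V n)] [DecidableEq (EkrFlag F V n)] (hV : finrank F V = n + 1) :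
    (mat Opp : Matrix (EkrFlag F V n) _ ℝ) = ekrD T n := by
  rw [← Q_D n le_rfl]
  congr 1
  funext U W
  exact propext (Q_opp hV U W).symm

def B (i : ℕ) (U W : EkrFlag F V n) : Prop :=
  (∀ a b, a + b = n + 1 → b ≠ i → U.U a ⊓ W.U b = ⊥) ∧ U.U (n + 1 - i) ⊓ W.U i ≠ ⊥

lemma B_step [Fintype (EkrFlag F V n)] (hV : finrank F V = n + 1) (i : ℕ) (h1 : 1 ≤ i) (h2 : i ≤ n) :
    (mat Opp : Matrix (EkrFlag F V n) _ ℝ) = mat (B i) * T i := by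
  apply mat_mul_T
  · intro U W h
    have hne : U.U (n + 1 - i) ⊓ W.U (i + 1) ≠ ⊥ := by
      apply ekr_inf_ne_bot _ _ ⊤ le_top le_top
      rw [finrank_top, hV, U.dim' _ (by omega), W.dim' _ (by omega)]; omega
    obtain ⟨x, ⟨hxU, hxW⟩, hx0⟩ := Submodule.exists_mem_ne_zero_of_ne_bot hne
    have hxn : x ∉ W.U (i - 1) := by
      intro hx
      have : x ∈ U.U (n + 1 - i + 1) ⊓ W.U (i - 1) := ⟨U.mono (by omega) hxU, hx⟩
      rw [h _ _ (by omega)] at this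
      exact hx0 (by simpa using this)
    refine ⟨W.upd i h1 h2 (W.U (i - 1) ⊔ F ∙ x) ?_ le_sup_left
      (sup_le (W.mono (by omega)) ?_), ⟨?_, ?_⟩, ?_⟩
    · rw [ekr_sup_span _ _ hxn, W.dim' _ (by omega)]; omega
    · rw [Submodule.span_singleton_le_iff_mem]; exact hxW
    · intro a b hab hb
      rw [upd_U_ne _ _ _ _ _ _ _ _ _ hb]; exact h a b hab
    · rw [upd_U]
      intro h0
      have : x ∈ U.U (n + 1 - i) ⊓ (W.U (i - 1) ⊔ F ∙ x) :=
        ⟨hxU, Submodule.mem_sup_right (Submodule.mem_span_singleton_self x)⟩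
      rw [h0] at this
      exact hx0 (by simpa using this)
    · intro k hk
      rw [upd_U_ne _ _ _ _ _ _ _ _ _ hk]
  · rintro U W' W ⟨hA, hB⟩ hadj hne a b hab
    by_cases hb : b = i
    · subst hb
      obtain rfl : a = n + 1 - b := by omega
      rw [inf_comm]
      apply ekr_key (W'.U (b - 1)) (W.U b) (W'.U b) (W'.U (b + 1)) (U.U (n - b)) (U.U (n + 1 - b))
      · rw [hadj (b - 1) (by omega)]; exact W.mono (by omega)
      · exact W'.mono (by omega)
      · rw [hadj (b + 1) (by omega)]; exact W.mono (by omega)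
      · exact W'.mono (by omega)
      · rw [W.dim' _ (by omega), W'.dim' _ (by omega)]; omega
      · rw [W'.dim' _ (by omega), W'.dim' _ (by omega)]; omega
      · intro h; exact hne (adj_eq hadj h.symm)
      · exact U.mono (by omega)
      · rw [U.dim' _ (by omega), U.dim' _ (by omega)]; omega
      · exact hA _ _ (by omega) (by omega)
      · rw [eq_bot_iff, ← hA (n + 2 - b) (b - 1) (by omega) (by omega), inf_comm]
        exact inf_le_inf_right _ (U.mono (by omega))
      · rw [inf_comm]; exact hB
    · rw [← hadj b hb]; exact hA a b hab hb
  · rintro U W ⟨-, h⟩ h'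
    exact h (h' _ _ (by omega))

lemma opp_transpose : (mat Opp : Matrix (EkrFlag F V n) _ ℝ).transpose = mat Opp := by
  ext U W
  simp only [mat, Matrix.transpose_apply, Matrix.of_apply]
  congr 1
  exact propext ⟨Opp.symm, Opp.symm⟩

lemma B_transpose (i : ℕ) (h1 : 1 ≤ i) (h2 : i ≤ n) :
    (mat (B (n + 1 - i)) : Matrix (EkrFlag F V n) _ ℝ).transpose = mat (B i) := by
  ext U W
  simp only [mat, Matrix.transpose_apply, Matrix.of_apply]
  congr 1
  apply propext
  constructor
  · rintro ⟨hA, hB⟩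
    refine ⟨fun a b hab hb => ?_, ?_⟩
    · rw [inf_comm]; exact hA b a (by omega) (by omega)
    · rw [inf_comm]; rwa [show n + 1 - (n + 1 - i) = i by omega] at hB
  · rintro ⟨hA, hB⟩
    refine ⟨fun a b hab hb => ?_, ?_⟩
    · rw [inf_comm]; exact hA b a (by omega) (by omega)
    · rw [inf_comm]; rwa [show n + 1 - (n + 1 - i) = i by omega]

lemma opp_eq_T_B [Fintype (EkrFlag F V n)] (hV : finrank F V = n + 1) (i : ℕ) (h1 : 1 ≤ i)
    (h2 : i ≤ n) : (mat Opp : Matrix (EkrFlag F V n) _ ℝ) = T (n + 1 - i) * mat (B i) := by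
  rw [← opp_transpose, B_step hV (n + 1 - i) (by omega) (by omega), Matrix.transpose_mul,
    T_transpose, B_transpose i h1 h2]

lemma adj_sum [Finite F] [Fintype (EkrFlag F V n)] (i : ℕ) (h1 : 1 ≤ i) (h2 : i ≤ n)
    (U : EkrFlag F V n) :
    ∑ W, (mat (adj i) : Matrix (EkrFlag F V n) _ ℝ) U W = Nat.card F + 1 := by
  classical
  have := card_adj U i h1 h2
  rw [Nat.card_eq_fintype_card, Fintype.card_subtype] at this
  simp only [mat, Matrix.of_apply, Finset.sum_boole]
  rw [this]; push_cast; rfl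

lemma T_eq [DecidableEq (EkrFlag F V n)] (i : ℕ) :
    (T i : Matrix (EkrFlag F V n) _ ℝ) = mat (adj i) - 1 := by
  ext U W
  simp only [T, mat, Matrix.of_apply, Matrix.sub_apply, Matrix.one_apply]
  by_cases h : U = W
  · subst h; simp [adj_refl]
  · rw [if_neg h, sub_zero]
    congr 1
    exact propext ⟨fun h' => h'.1, fun h' => ⟨h', h⟩⟩

lemma N_mul [Finite F] [Fintype (EkrFlag F V n)] (i : ℕ) (h1 : 1 ≤ i) (h2 : i ≤ n) :
    (mat (adj i) : Matrix (EkrFlag F V n) _ ℝ) * mat (adj i) = ((Nat.card F : ℝ) + 1) • mat (adj i) := by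
  classical
  ext U W
  rw [Matrix.mul_apply, Matrix.smul_apply, ← adj_sum i h1 h2 U, smul_eq_mul, Finset.sum_mul]
  apply Finset.sum_congr rfl
  intro X _
  simp only [mat, Matrix.of_apply]
  by_cases h : adj i U X
  · have : adj i X W ↔ adj i U W := ⟨adj_trans h, adj_trans (adj_symm h)⟩
    simp only [this]
  · simp [h]

lemma T_quad [Finite F] [Fintype (EkrFlag F V n)] [DecidableEq (EkrFlag F V n)] (i : ℕ)
    (h1 : 1 ≤ i) (h2 : i ≤ n) :
    (T i : Matrix (EkrFlag F V n) _ ℝ) * T i =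
      ((Nat.card F : ℝ) - 1) • T i + (Nat.card F : ℝ) • 1 := by
  rw [T_eq, sub_mul, mul_sub, N_mul i h1 h2, one_mul, mul_one]
  module

open Matrix in
lemma T_one [Finite F] [Fintype (EkrFlag F V n)] (i : ℕ) (h1 : 1 ≤ i) (h2 : i ≤ n) :
    (T i : Matrix (EkrFlag F V n) _ ℝ) *ᵥ 1 = (Nat.card F : ℝ) • 1 := by
  classical
  rw [T_eq, sub_mulVec, one_mulVec]
  ext U
  have := adj_sum i h1 h2 U
  simp [mulVec, dotProduct, this]

open Matrix in
lemma T_conn [Finite F] [Fintype (EkrFlag F V n)] (hV : finrank F V = n + 1)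
    (f : EkrFlag F V n → ℝ)
    (hf : ∀ i, 1 ≤ i → i ≤ n → T i *ᵥ f = (Nat.card F : ℝ) • f) (U W : EkrFlag F V n) :
    f U = f W := by
  classical
  apply connected hV f
  intro i h1 h2 U W h
  have h3 := hf i h1 h2
  rw [T_eq, sub_mulVec, one_mulVec, sub_eq_iff_eq_add] at h3
  have h4 : ∀ X, (mat (adj i) *ᵥ f) X = ((Nat.card F : ℝ) + 1) * f X := by
    intro X; rw [h3]; simp; ring
  have h5 : (mat (adj i) *ᵥ f) U = (mat (adj i) *ᵥ f) W := by
    simp only [mulVec, dotProduct]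
    apply Finset.sum_congr rfl
    intro X _
    have : adj i U X ↔ adj i W X := ⟨adj_trans (adj_symm h), adj_trans h⟩
    simp only [mat, Matrix.of_apply, this]
  rw [h4, h4] at h5
  exact mul_left_cancel₀ (by positivity) h5

theorem full_bound [Finite F] [Fintype (EkrFlag F V n)] (hn : 1 ≤ n) (hV : finrank F V = n + 1)
    (C : Finset (EkrFlag F V n)) (hC : ∀ U ∈ C, ∀ W ∈ C, ¬ Opp U W) :
    (C.card : ℝ) * (1 + Real.sqrt (Nat.card F) ^ (n + 1)) ≤ Fintype.card (EkrFlag F V n) := by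
  classical
  have hq : (1 : ℝ) < Nat.card F := by exact_mod_cast (Finite.one_lt_card (α := F))
  apply ekr_hoffman n hn T (mat Opp) (Nat.card F : ℝ) hq (fun i => T_quad i) (opp_eq_D hV)
  · intro i h1 h2
    have e1 := B_step (F := F) hV i h1 h2
    have e2 := opp_eq_T_B (F := F) hV i h1 h2
    have q1 := T_quad (F := F) (V := V) (n := n) i h1 h2
    have q2 := T_quad (F := F) (V := V) (n := n) (n + 1 - i) (by omega) (by omega)
    calc (mat Opp : Matrix (EkrFlag F V n) _ ℝ) * T i = mat (B i) * (T i * T i) := by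
          rw [← Matrix.mul_assoc, ← e1]
      _ = ((Nat.card F : ℝ) - 1) • mat Opp + (Nat.card F : ℝ) • mat (B i) := by
          rw [q1, mul_add, mul_smul_comm, mul_smul_comm, ← e1, mul_one]
      _ = (T (n + 1 - i) * T (n + 1 - i)) * mat (B i) := by
          rw [q2, add_mul, smul_mul_assoc, smul_mul_assoc, ← e2, one_mul]
      _ = T (n + 1 - i) * mat Opp := by rw [Matrix.mul_assoc, ← e2]
  · exact fun i hi => T_out hV i hi
  · exact T_transpose
  · exact opp_transpose
  · exact fun i => T_one i
  · exact T_conn hV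
  · intro U hU W hW
    simp [mat, hC U hU W hW]

end EkrFlag

def ekrRestrict {F : Type} [Field F] {n : ℕ} {J : Finset ℕ} (hJ : J ⊆ Finset.Icc 1 n)
    (W : EkrFlag F (Fin (n + 1) → F) n) : FlagOfType F n J where
  U := fun k => W.U k
  dim := fun k => W.dim' k (by have := Finset.mem_Icc.1 (hJ k.2); omega)
  mono := fun _ _ h => W.mono h

lemma FlagOfType.ekr_ext {F : Type} [Field F] {n : ℕ} {J : Finset ℕ} {P P' : FlagOfType F n J}
    (h : ∀ k, P.U k = P'.U k) : P = P' := by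
  cases P; cases P'
  have := funext h
  simp only at this
  subst this
  rfl

lemma ekrRestrict_surj {F : Type} [Field F] {n : ℕ} {J : Finset ℕ} (hJ : J ⊆ Finset.Icc 1 n) :
    Function.Surjective (ekrRestrict (F := F) hJ) := by
  classical
  intro P
  obtain ⟨W, hW⟩ := EkrFlag.exists_ext (F := F) (V := Fin (n + 1) → F) (n := n) (by simp) J
    (fun k => if h : k ∈ J then P.U ⟨k, h⟩ else ⊥)
    (by intro k hk; rw [dif_pos hk]; exact P.dim ⟨k, hk⟩)
    (by intro k hk l hl h; rw [dif_pos hk, dif_pos hl]; exact P.mono ⟨k, hk⟩ ⟨l, hl⟩ h)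
  refine ⟨W, FlagOfType.ekr_ext fun k => ?_⟩
  have := hW k k.2
  rw [dif_pos k.2] at this
  exact this

lemma ekr_fiber_le {F : Type} [Field F] [Finite F] {n : ℕ} {J : Finset ℕ}
    (hJ : J ⊆ Finset.Icc 1 n) (P P' : FlagOfType F n J) :
    Nat.card {W // ekrRestrict hJ W = P} ≤ Nat.card {W // ekrRestrict hJ W = P'} := by
  obtain ⟨U, rfl⟩ := ekrRestrict_surj hJ P
  obtain ⟨U', rfl⟩ := ekrRestrict_surj hJ P'
  obtain ⟨g, hg⟩ := EkrFlag.transitive (by simp) U U'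
  have hmem : ∀ W : {W // ekrRestrict hJ W = ekrRestrict hJ U},
      ekrRestrict hJ (EkrFlag.mapG g W.1) = ekrRestrict hJ U' := by
    intro W
    apply FlagOfType.ekr_ext
    intro k
    have h1 : W.1.U k = U.U k := congrArg (fun P => P.U k) W.2
    change (W.1.U k).map _ = U'.U k
    rw [h1, hg]
  apply Nat.card_le_card_of_injective
    (fun W : {W // ekrRestrict hJ W = ekrRestrict hJ U} =>
      (⟨EkrFlag.mapG g W.1, hmem W⟩ : {W // ekrRestrict hJ W = ekrRestrict hJ U'}))
  intro W W' h
  exact Subtype.ext (EkrFlag.mapG_injective g (congrArg Subtype.val h))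

/-- If `J ⊆ {1, …, n}` is a nonempty self-opposite type and `C` is an EKR-set of flags of
type `J` in `F_q^{n+1}`, then `|C| · (1 + (√q)^{n+1}) ≤ v` where `v` is the total number
of flags of type `J`. -/
theorem EKR_flags_of_type_bound (n : ℕ) (hn : 1 ≤ n)
    (F : Type) [Field F] [Fintype F] (q : ℕ) (hq : q = Fintype.card F)
    (J : Finset ℕ) (hJsub : J ⊆ Finset.Icc 1 n) (hJne : J.Nonempty)
    (hJself : ∀ k, k ∈ J ↔ n + 1 - k ∈ J)
    (C : Set (FlagOfType F n J))
    (hC : ∀ F1 ∈ C, ∀ F2 ∈ C, ¬ F1.Opposite F2) :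
    (Nat.card C : ℝ) * (1 + Real.sqrt q ^ (n + 1)) ≤ (Nat.card (FlagOfType F n J) : ℝ) := by
  classical
  have : Fintype (EkrFlag F (Fin (n + 1) → F) n) := Fintype.ofFinite _
  have hfin : Finite (FlagOfType F n J) := Finite.of_surjective _ (ekrRestrict_surj hJsub)
  have : Fintype (FlagOfType F n J) := Fintype.ofFinite _
  have hCfin : Fintype C := Fintype.ofFinite _
  have hqc : q = Nat.card F := by rw [hq, Nat.card_eq_fintype_card]
  set r : EkrFlag F (Fin (n + 1) → F) n → FlagOfType F n J := ekrRestrict hJsub with hr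
  set C' : Finset (EkrFlag F (Fin (n + 1) → F) n) := Finset.univ.filter fun W => r W ∈ C with hC'
  have hb := EkrFlag.full_bound hn (by simp) C' (by
    intro U hU W hW hopp
    simp only [hC', Finset.mem_filter, Finset.mem_univ, true_and] at hU hW
    apply hC _ hU _ hW
    intro k l hkl
    have hk := Finset.mem_Icc.1 (hJsub k.2)
    exact hopp k l (by omega))
  rw [← hqc] at hb
  have hconst : ∃ c : ℕ, 0 < c ∧ ∀ P : FlagOfType F n J,
      (Finset.univ.filter fun W => r W = P).card = c := by
    have hcard : ∀ P : FlagOfType F n J, (Finset.univ.filter fun W => r W = P).card =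
        Nat.card {W // ekrRestrict hJsub W = P} := by
      intro P; rw [Nat.card_eq_fintype_card, Fintype.card_subtype]
    rcases isEmpty_or_nonempty (FlagOfType F n J) with h | ⟨⟨P⟩⟩
    · exact ⟨1, one_pos, fun P => (h.false P).elim⟩
    · refine ⟨(Finset.univ.filter fun W => r W = P).card, ?_, ?_⟩
      · obtain ⟨W, hW⟩ := ekrRestrict_surj hJsub P
        exact Finset.card_pos.2 ⟨W, by simp [hr, hW]⟩
      · intro P'
        rw [hcard, hcard]
        exact le_antisymm (ekr_fiber_le hJsub _ _) (ekr_fiber_le hJsub _ _)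
  obtain ⟨c, hc0, hc⟩ := hconst
  have h1 : Fintype.card (EkrFlag F (Fin (n + 1) → F) n) = Nat.card (FlagOfType F n J) * c := by
    have := Finset.card_eq_sum_card_fiberwise (f := r)
      (s := Finset.univ) (t := Finset.univ) (by intro x _; simp)
    rw [Finset.sum_congr rfl (fun P _ => hc P), Finset.sum_const, smul_eq_mul] at this
    rw [Nat.card_eq_fintype_card]
    simpa using this
  have h2 : C'.card = Nat.card C * c := by
    have := Finset.card_eq_sum_card_fiberwise (f := r)
      (s := C') (t := C.toFinset) (by intro x hx; simpa [hC'] using hx)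
    rw [Finset.sum_congr rfl (fun P hP => ?_), Finset.sum_const, smul_eq_mul] at this
    · rw [this, Nat.card_eq_fintype_card, Set.toFinset_card]
    · rw [← hc P]
      congr 1
      ext W
      simp only [hC', Finset.mem_filter, Finset.mem_univ, true_and, and_iff_right_iff_imp]
      rintro rfl
      simpa using hP
  rw [h1, h2] at hb
  push_cast at hb
  have hcR : (0 : ℝ) < c := by exact_mod_cast hc0
  refine le_of_mul_le_mul_right ?_ hcR
  linarith
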